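/- arXiv:funct-an/9607003 — 3 statements merged into one kernel-verified Lean document; each statement's English description precedes it below -/
import Mathlib

section
/- Let 𝔄 be a C*-algebra. Then: (i) every positive element e ∈ 𝔄 with ‖e‖ = 1 can be approximated in norm by elements of 𝔄_P; (ii) if e ∈ 𝔄 with 0 ≤ e ≤ 1 admits a nonzero positive p ∈ 𝔄 with p e = p, then p can be taken from 𝔄_P, i.e., there exists a nonzero p′ ∈ 𝔄_P with p′ e = p′. -/
open scoped ComplexOrder

/-- The set `𝔄_P`: positive elements `e` with `0 ≤ e ≤ 1` admitting a nonzero positive `p`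
with `p * e = p`. -/
def MemAP {A : Type*} [CStarAlgebra A] [PartialOrder A] [StarOrderedRing A] (e : A) : Prop :=
  0 ≤ e ∧ e ≤ 1 ∧ ∃ p : A, 0 ≤ p ∧ p ≠ 0 ∧ p * e = p

/-!
If `f` takes values in `[0, 1]` on the spectrum of `a` and equals `1` near some spectral value `s`,
then `f(a)` belongs to `𝔄_P`: a bump function `g` supported near `s` satisfies `g * f = g`.
For a positive element, the norm is such a spectral value. The approximation of `e` is `f(e)` with
`f t = min 1 (t + δ)`, which moves spectral values by at most `δ`. For the witness, the relation
`p * e = p` passes to every left multiple of `p`, in particular to `star p * p`, and a positive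
nonzero `p` has a left multiple in `𝔄_P`, namely `f(p)` with `f t = t / max t r` and `r < ‖p‖`.
-/

section

open Filter Topology

theorem cfc_ne_zero_of_apply_ne_zero {A : Type*} [CStarAlgebra A] {a : A}
    (ha : IsSelfAdjoint a) {f : ℝ → ℝ} (hf : ContinuousOn f (spectrum ℝ a)) {s : ℝ}
    (hs : s ∈ spectrum ℝ a) (hfs : f s ≠ 0) : cfc f a ≠ 0 :=
  norm_pos_iff.mp <| (norm_pos_iff.mpr hfs).trans_le (norm_apply_le_norm_cfc f a hs hf ha)

variable {A : Type*} [CStarAlgebra A] [PartialOrder A] [StarOrderedRing A]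

theorem MemAP.ne_zero {e : A} (he : MemAP e) : e ≠ 0 := by
  rintro rfl
  obtain ⟨-, -, p, -, hp, hpe⟩ := he
  exact hp (by rw [← hpe, mul_zero])

theorem memAP_cfc_of_eventually_eq_one {a : A} (ha : IsSelfAdjoint a) {f : ℝ → ℝ}
    (hf : ContinuousOn f (spectrum ℝ a)) (hf01 : ∀ t ∈ spectrum ℝ a, f t ∈ Set.Icc 0 1)
    {s : ℝ} (hs : s ∈ spectrum ℝ a) (hfs : ∀ᶠ t in 𝓝[spectrum ℝ a] s, f t = 1) :
    MemAP (cfc f a) := by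
  obtain ⟨δ, hδ, hfδ⟩ := Metric.eventually_nhds_iff.mp (eventually_nhdsWithin_iff.mp hfs)
  let g : ℝ → ℝ := fun t ↦ max 0 (δ - dist t s)
  have hg : ContinuousOn g (spectrum ℝ a) := by fun_prop
  have hgs : g s ≠ 0 := by simp [g, hδ]
  have hgf : Set.EqOn (fun t ↦ g t * f t) g (spectrum ℝ a) := by
    intro t ht
    rcases lt_or_ge (dist t s) δ with hts | hts
    · simp [hfδ hts ht]
    · simp [g, hts]
  refine ⟨cfc_nonneg fun t ht ↦ (hf01 t ht).1, cfc_le_one f a fun t ht ↦ (hf01 t ht).2,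
    cfc g a, cfc_nonneg fun _ _ ↦ le_max_left _ _, cfc_ne_zero_of_apply_ne_zero ha hg hs hgs, ?_⟩
  rw [← cfc_mul g f a hg hf, cfc_congr hgf]

theorem exists_memAP_norm_sub_le [Nontrivial A] {e : A} (he : 0 ≤ e) {δ : ℝ}
    (hδ : |‖e‖ - 1| < δ) : ∃ e' : A, MemAP e' ∧ ‖e - e'‖ ≤ δ := by
  let f : ℝ → ℝ := fun t ↦ min 1 (t + δ)
  have hδ₀ : 0 ≤ δ := (abs_nonneg _).trans hδ.le
  obtain ⟨hlower, hupper⟩ := abs_lt.mp hδ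
  have hf : ContinuousOn f (spectrum ℝ e) := by fun_prop
  have hf01 : ∀ t ∈ spectrum ℝ e, f t ∈ Set.Icc 0 1 := fun t ht ↦
    ⟨le_min zero_le_one (add_nonneg (spectrum_nonneg_of_nonneg he ht) hδ₀), min_le_left _ _⟩
  have hf_one : ∀ᶠ t in 𝓝[spectrum ℝ e] ‖e‖, f t = 1 := by
    have h_gt : ∀ᶠ t in 𝓝[spectrum ℝ e] ‖e‖, 1 - δ < t :=
      eventually_nhdsWithin_of_eventually_nhds (lt_mem_nhds (by linarith))
    filter_upwards [h_gt] with t ht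
    exact min_eq_left (by linarith)
  have hdist : ∀ t ∈ spectrum ℝ e, ‖t - f t‖ ≤ δ := by
    intro t ht
    have ht_le : t ≤ ‖e‖ := (le_abs_self t).trans (spectrum.norm_le_norm_of_mem ht)
    have hf_lower : t - δ ≤ f t := le_min (by linarith) (by linarith)
    have hf_upper : f t ≤ t + δ := min_le_right _ _
    exact abs_sub_le_iff.mpr ⟨sub_le_comm.mp hf_lower, sub_le_iff_le_add'.mpr hf_upper⟩
  refine ⟨cfc f e, memAP_cfc_of_eventually_eq_one he.isSelfAdjoint hf hf01
    (CStarAlgebra.norm_mem_spectrum_of_nonneg he) hf_one, ?_⟩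
  calc ‖e - cfc f e‖ = ‖cfc (fun t ↦ t - f t) e‖ := by
        rw [cfc_sub (fun t : ℝ ↦ t) f e, cfc_id' ℝ e]
    _ ≤ δ := norm_cfc_le hδ₀ hdist

theorem exists_memAP_mul {p : A} (hp : 0 ≤ p) (hp₀ : p ≠ 0) : ∃ k : A, MemAP (k * p) := by
  have : Nontrivial A := nontrivial_of_ne p 0 hp₀
  obtain ⟨r, hr, hrp⟩ := exists_between (norm_pos_iff.mpr hp₀)
  have hmax (t : ℝ) : 0 < max t r := lt_max_of_lt_right hr
  let k : ℝ → ℝ := fun t ↦ (max t r)⁻¹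
  have hk : ContinuousOn k (spectrum ℝ p) :=
    (Continuous.inv₀ (by fun_prop) fun t ↦ (hmax t).ne').continuousOn
  have hk01 : ∀ t ∈ spectrum ℝ p, k t * t ∈ Set.Icc 0 1 := fun t ht ↦
    ⟨mul_nonneg (inv_nonneg.mpr (hmax t).le) (spectrum_nonneg_of_nonneg hp ht),
      (inv_mul_le_one₀ (hmax t)).mpr (le_max_left _ _)⟩
  have hk_one : ∀ᶠ t in 𝓝[spectrum ℝ p] ‖p‖, k t * t = 1 := by
    filter_upwards [eventually_nhdsWithin_of_eventually_nhds (lt_mem_nhds hrp)] with t ht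
    simp only [k, max_eq_left ht.le, inv_mul_cancel₀ (hr.trans ht).ne']
  have hkp : cfc (fun t ↦ k t * t) p = cfc k p * p := by
    rw [cfc_mul k (fun t ↦ t) p hk, cfc_id' ℝ p]
  exact ⟨cfc k p, hkp ▸ memAP_cfc_of_eventually_eq_one hp.isSelfAdjoint (hk.mul continuousOn_id)
    hk01 (CStarAlgebra.norm_mem_spectrum_of_nonneg hp) hk_one⟩

theorem exists_memAP_mul_eq_self {e p : A} (hp : p ≠ 0) (hpe : p * e = p) :
    ∃ p' : A, MemAP p' ∧ p' * e = p' := by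
  obtain ⟨k, hk⟩ := exists_memAP_mul (star_mul_self_nonneg p)
    ((CStarRing.star_mul_self_ne_zero_iff p).mpr hp)
  exact ⟨k * (star p * p), hk, by simp only [mul_assoc, hpe]⟩

theorem memAP_approximation_and_witness_general :
    (∀ e : A, 0 ≤ e → e ≠ 0 → ∀ ε : ℝ, |‖e‖ - 1| < ε → ∃ e' : A, MemAP e' ∧ ‖e - e'‖ < ε) ∧
    (∀ e p : A, p ≠ 0 → p * e = p → ∃ p' : A, MemAP p' ∧ p' ≠ 0 ∧ p' * e = p') := by
  refine ⟨fun e he he₀ ε hε ↦ ?_, fun e p hp hpe ↦ ?_⟩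
  · have : Nontrivial A := nontrivial_of_ne e 0 he₀
    obtain ⟨δ, heδ, hδε⟩ := exists_between hε
    obtain ⟨e', he', hdist⟩ := exists_memAP_norm_sub_le he heδ
    exact ⟨e', he', hdist.trans_lt hδε⟩
  · obtain ⟨p', hp', hp'e⟩ := exists_memAP_mul_eq_self hp hpe
    exact ⟨p', hp', hp'.ne_zero, hp'e⟩

end

/-- Basic properties of `𝔄_P`: (i) every positive norm-one element is norm-approximated by
elements of `𝔄_P`; (ii) the element `p` witnessing membership of `e` in `𝔄_P` can itself be
taken from `𝔄_P`. -/
theorem memAP_approximation_and_witness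
    {A : Type*} [CStarAlgebra A] [PartialOrder A] [StarOrderedRing A] :
    (∀ e : A, 0 ≤ e → ‖e‖ = 1 → ∀ ε : ℝ, 0 < ε → ∃ e' : A, MemAP e' ∧ ‖e - e'‖ < ε) ∧
    (∀ e : A, 0 ≤ e → e ≤ 1 → (∃ p : A, 0 ≤ p ∧ p ≠ 0 ∧ p * e = p) →
      ∃ p' : A, MemAP p' ∧ p' ≠ 0 ∧ p' * e = p') :=
  ⟨fun e he he₁ ε hε ↦ memAP_approximation_and_witness_general.1 e he
      (ne_zero_of_norm_ne_zero (by simp [he₁])) ε (by simpa [he₁] using hε),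
    fun e _ _ ⟨p, _, hp, hpe⟩ ↦ memAP_approximation_and_witness_general.2 e p hp hpe⟩
end

section
/- Let 𝔄 = ⊗_{n=1}^∞ M₂ be the UHF algebra of type 2^∞ and let α = ⊗_{n=1}^∞ Ad diag(1, e^{2πiθ_n}), where the irrational numbers θ_n are rationally independent. Then the fixed point algebra of α equals the maximal abelian diagonal subalgebra ⊗_{n=1}^∞ ℂ², the extremal α-invariant states are exactly the pure product states x ↦ Tr(x ⊗_{n=1}^∞ diag(ρ_n, 1 − ρ_n)) with ρ_n ∈ {0,1}, and consequently every extremal α-invariant state is pure and the set of α-invariant pure states is weak*-closed in the set of α-invariant states (in particular it is not weak*-dense). -/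
open scoped ComplexOrder

/-- A state on a C*-algebra: a positive linear functional of norm one. -/
def IsState {A : Type*} [CStarAlgebra A] (φ : A →L[ℂ] ℂ) : Prop :=
  (∀ x : A, 0 ≤ φ (star x * x)) ∧ ‖φ‖ = 1

/-- A pure state: an extreme point of the state space. -/
def IsPureState {A : Type*} [CStarAlgebra A] (φ : A →L[ℂ] ℂ) : Prop :=
  IsState φ ∧ ∀ (ψ₁ ψ₂ : A →L[ℂ] ℂ) (t : ℝ), IsState ψ₁ → IsState ψ₂ →
    0 < t → t < 1 → φ = t • ψ₁ + (1 - t) • ψ₂ → ψ₁ = φ ∧ ψ₂ = φ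

/-- `u` is an extreme point of the convex set `S`. -/
def ExtremeIn {F : Type*} [AddCommGroup F] [Module ℝ F] (S : Set F) (u : F) : Prop :=
  u ∈ S ∧ ∀ v ∈ S, ∀ w ∈ S, ∀ t : ℝ, 0 < t → t < 1 → u = t • v + (1 - t) • w → v = u ∧ w = u

/-- The matrix algebra `M₂^{⊗ n}`, realized as matrices indexed by words in `Fin n → Fin 2`. -/
abbrev M2pow (n : ℕ) := Matrix (Fin n → Fin 2) (Fin n → Fin 2) ℂ

/-- The unital embedding `M₂^{⊗ n} → M₂^{⊗ (n+1)}`, `x ↦ x ⊗ 1`. -/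
noncomputable def m2Embed (n : ℕ) (x : M2pow n) : M2pow (n + 1) :=
  Matrix.of fun s t =>
    (if s (Fin.last n) = t (Fin.last n) then (1 : ℂ) else 0) *
      x (fun k => s k.castSucc) (fun k => t k.castSucc)

/-- A model of the UHF algebra `⊗_{n=1}^∞ M₂` of type `2^∞`: a C*-algebra together with
compatible unital embeddings of the matrix algebras `M₂^{⊗ n}` with dense union. -/
structure UHF2Model (A : Type*) [CStarAlgebra A] where
  j : ∀ n : ℕ, M2pow n →⋆ₐ[ℂ] A
  inj : ∀ n, Function.Injective (j n)
  compat : ∀ n (x : M2pow n), j (n + 1) (m2Embed n x) = j n x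
  dense : Dense (⋃ n, Set.range (j n))

/-- The diagonal unitary `⊗_{k<n} diag(1, e^{2πiθ_k})` in `M₂^{⊗ n}`. -/
noncomputable def diagUnitary (θ : ℕ → ℝ) (n : ℕ) : M2pow n :=
  Matrix.diagonal fun s => Complex.exp
    (2 * Real.pi * Complex.I * ∑ k : Fin n, ((s k : ℕ) : ℂ) * ((θ (k : ℕ) : ℝ) : ℂ))

/-!
The matrix units of `M₂^{⊗ n}` are eigenvectors of `α`, with eigenvalue `≠ 1` off the diagonal.
Hence every matrix differs from its diagonal part by a coboundary `α w - w`. By averaging, a fixed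
point `b` satisfies `‖b‖ ≤ ‖b - (α w - w)‖`, so passing to diagonal parts preserves approximations
of fixed points, and the fixed points are the closure of the diagonal matrices. Invariant
functionals kill coboundaries, so the fixed points lie in the centralizer of every invariant state.
An extremal invariant state therefore takes only the values `0` and `1` on diagonal projections:
otherwise it is a mixture of its compressions. On the minimal projections these values single out a
point of `{0, 1}^ℕ`, which determines the state as a pure product state. Having values `0` and `1`
on given elements is a weak*-closed condition, whence the statements about closure and density.
-/

lemma norm_le_norm_sub_apply_sub_self {E F : Type*} [SeminormedAddCommGroup E] [NormedSpace ℝ E]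
    [FunLike F E E] [AddMonoidHomClass F E E] (f : F) (hf : ∀ x, ‖f x‖ ≤ ‖x‖) {b : E}
    (hb : f b = b) (w : E) : ‖b‖ ≤ ‖b - (f w - w)‖ := by
  set c := b - (f w - w) with hc
  have hsum (N : ℕ) : ‖N • b + (w - f^[N] w)‖ ≤ N * ‖c‖ := by
    induction N with
    | zero => simp
    | succ N ih =>
      have hstep : (N + 1) • b + (w - f^[N + 1] w) = f (N • b + (w - f^[N] w)) + c := by
        rw [Function.iterate_succ_apply', map_add, map_sub, map_nsmul, hb, hc, succ_nsmul]
        abel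
      calc ‖(N + 1) • b + (w - f^[N + 1] w)‖ ≤ ‖N • b + (w - f^[N] w)‖ + ‖c‖ := by
            rw [hstep]
            exact (norm_add_le _ _).trans (by gcongr; exact hf _)
        _ ≤ (N + 1 : ℕ) * ‖c‖ := by push_cast; linarith
  have hiter (N : ℕ) : ‖f^[N] w‖ ≤ ‖w‖ := by
    induction N with
    | zero => rfl
    | succ N ih => exact (Function.iterate_succ_apply' f N w ▸ hf _).trans ih
  have hbound (N : ℕ) : N * (‖b‖ - ‖c‖) ≤ 2 * ‖w‖ := by
    have hdiff : ‖w - f^[N] w‖ ≤ ‖w‖ + ‖w‖ := (norm_sub_le _ _).trans (by gcongr; exact hiter N)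
    have hle := (norm_le_add_norm_add (N • b) (w - f^[N] w)).trans (add_le_add (hsum N) hdiff)
    rw [← Nat.cast_smul_eq_nsmul ℝ, norm_smul, Real.norm_natCast] at hle
    linarith
  by_contra! hlt
  obtain ⟨N, hN⟩ := exists_nat_gt (2 * ‖w‖ / (‖b‖ - ‖c‖))
  rw [div_lt_iff₀ (sub_pos.mpr hlt)] at hN
  exact (hN.trans_le (hbound N)).false

section PositiveFunctional

variable {A : Type*} [CStarAlgebra A]

lemma norm_map_star_mul_sq_le [PartialOrder A] [StarOrderedRing A] (f : A →ₚ[ℂ] ℂ) (x y : A) :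
    ‖f (star x * y)‖ ^ 2 ≤ ‖f (star x * x)‖ * ‖f (star y * y)‖ := by
  have h := norm_inner_le_norm (𝕜 := ℂ) (f.toPreGNS x) (f.toPreGNS y)
  have hnorm (z : A) : ‖f.toPreGNS z‖ ^ 2 = ‖f (star z * z)‖ := by
    have := congrArg norm (f.preGNS_norm_sq (f.toPreGNS z))
    simpa using this
  rw [← hnorm, ← hnorm, ← mul_pow]
  gcongr
  simpa [PositiveLinearMap.preGNS_inner_def] using h

lemma norm_map_le_norm_map_one_mul_norm [PartialOrder A] [StarOrderedRing A] (f : A →ₚ[ℂ] ℂ)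
    (x : A) : ‖f x‖ ≤ ‖f 1‖ * ‖x‖ := by
  refine le_of_sq_le_sq ?_ (by positivity)
  calc ‖f x‖ ^ 2 ≤ ‖f 1‖ * ‖f (star x * x)‖ := by simpa using norm_map_star_mul_sq_le f 1 x
    _ ≤ ‖f 1‖ * (‖f 1‖ * ‖star x * x‖) := by
      gcongr
      exact f.norm_apply_le_of_nonneg _ (star_mul_self_nonneg x)
    _ = (‖f 1‖ * ‖x‖) ^ 2 := by rw [CStarRing.norm_star_mul_self]; ring

variable {φ : A →L[ℂ] ℂ}

lemma exists_positiveLinearMap_coe_eq (hφ : ∀ x : A, 0 ≤ φ (star x * x)) :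
    letI := CStarAlgebra.spectralOrder A
    ∃ f : A →ₚ[ℂ] ℂ, ⇑f = φ := by
  let _ := CStarAlgebra.spectralOrder A
  let _ := CStarAlgebra.spectralOrderedRing A
  refine ⟨PositiveLinearMap.mk₀ (φ : A →ₗ[ℂ] ℂ) fun x hx => ?_, rfl⟩
  obtain ⟨y, rfl⟩ := CStarAlgebra.nonneg_iff_eq_star_mul_self.mp hx
  exact hφ y

lemma opNorm_eq_norm_map_one (hφ : ∀ x : A, 0 ≤ φ (star x * x)) : ‖φ‖ = ‖φ 1‖ := by
  let _ := CStarAlgebra.spectralOrder A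
  let _ := CStarAlgebra.spectralOrderedRing A
  obtain ⟨f, hf⟩ := exists_positiveLinearMap_coe_eq hφ
  refine le_antisymm (φ.opNorm_le_bound (norm_nonneg _) fun x => ?_) ?_
  · simpa only [hf] using norm_map_le_norm_map_one_mul_norm f x
  · exact φ.unit_le_opNorm 1 (IsStarProjection.norm_le _ (.one A))

lemma map_mul_eq_zero_of_isStarProjection (hφ : ∀ x : A, 0 ≤ φ (star x * x)) {q : A}
    (hq : IsStarProjection q) (h : φ q = 0) (x : A) : φ (q * x) = 0 ∧ φ (x * q) = 0 := by
  let _ := CStarAlgebra.spectralOrder A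
  let _ := CStarAlgebra.spectralOrderedRing A
  obtain ⟨f, hf⟩ := exists_positiveLinearMap_coe_eq hφ
  have hqq : q * q = q := hq.isIdempotentElem.eq
  constructor
  · simpa [hf, hq.isSelfAdjoint.star_eq, hqq, h] using norm_map_star_mul_sq_le f q x
  · simpa [hf, hq.isSelfAdjoint.star_eq, hqq, h] using norm_map_star_mul_sq_le f (star x) q

lemma map_nonneg_of_isStarProjection (hφ : ∀ x : A, 0 ≤ φ (star x * x)) {p : A}
    (hp : IsStarProjection p) : 0 ≤ φ p := by
  simpa only [hp.isSelfAdjoint.star_eq, hp.isIdempotentElem.eq] using hφ p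

end PositiveFunctional

section State

variable {A : Type*} [CStarAlgebra A] {φ ψ ψ₁ ψ₂ : A →L[ℂ] ℂ} {p : A} {t : ℝ}

lemma isState_iff_map_one : IsState φ ↔ (∀ x : A, 0 ≤ φ (star x * x)) ∧ φ 1 = 1 := by
  refine and_congr_right fun hφ => ?_
  have h1 : 0 ≤ φ 1 := map_nonneg_of_isStarProjection hφ (.one A)
  rw [opNorm_eq_norm_map_one hφ]
  refine ⟨fun h => ?_, fun h => by rw [h, norm_one]⟩
  rw [Complex.eq_coe_norm_of_nonneg h1, h, Complex.ofReal_one]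

protected lemma IsState.map_one (hφ : IsState φ) : φ 1 = 1 :=
  (isState_iff_map_one.mp hφ).2

lemma IsState.convex_combination (hφ : IsState φ) (hψ : IsState ψ) (h0 : 0 ≤ t) (h1 : t ≤ 1) :
    IsState (t • φ + (1 - t) • ψ) := by
  refine isState_iff_map_one.mpr ⟨fun x => ?_, by simp [hφ.map_one, hψ.map_one]⟩
  exact add_nonneg (smul_nonneg h0 (hφ.1 x)) (smul_nonneg (sub_nonneg.mpr h1) (hψ.1 x))

lemma IsState.exists_map_eq_ofReal (hφ : IsState φ) (hp : IsStarProjection p) :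
    ∃ r ∈ Set.Icc (0 : ℝ) 1, φ p = r := by
  have h0 : 0 ≤ φ p := map_nonneg_of_isStarProjection hφ.1 hp
  have h1 : 0 ≤ φ (1 - p) := map_nonneg_of_isStarProjection hφ.1 hp.one_sub
  rw [map_sub, hφ.map_one, sub_nonneg, Complex.eq_coe_norm_of_nonneg h0] at h1
  exact ⟨‖φ p‖, ⟨norm_nonneg _, by exact_mod_cast h1⟩, Complex.eq_coe_norm_of_nonneg h0⟩

lemma IsState.map_mul_mul_of_map_eq_one (hφ : IsState φ) (hp : IsStarProjection p)
    (h : φ p = 1) (x : A) : φ (p * x * p) = φ x := by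
  have hq : φ (1 - p) = 0 := by rw [map_sub, hφ.map_one, h, sub_self]
  have hvanish := map_mul_eq_zero_of_isStarProjection hφ.1 hp.one_sub hq
  have hx : x = p * x * p + p * x * (1 - p) + (1 - p) * x := by noncomm_ring
  conv_rhs => rw [hx, map_add, map_add, (hvanish _).1, (hvanish _).2, add_zero, add_zero]

lemma map_eq_one_of_convex_combination_map_eq_one (h₁ : IsState ψ₁) (h₂ : IsState ψ₂)
    (hp : IsStarProjection p) (ht0 : 0 < t) (ht1 : t < 1)
    (h : (t • ψ₁ + (1 - t) • ψ₂) p = 1) : ψ₁ p = 1 ∧ ψ₂ p = 1 := by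
  obtain ⟨a, ⟨-, ha⟩, hψ₁⟩ := h₁.exists_map_eq_ofReal hp
  obtain ⟨b, ⟨-, hb⟩, hψ₂⟩ := h₂.exists_map_eq_ofReal hp
  have hab : t * a + (1 - t) * b = 1 := by
    rw [add_apply, smul_apply, smul_apply, hψ₁, hψ₂, Complex.real_smul, Complex.real_smul] at h
    exact_mod_cast h
  rw [hψ₁, hψ₂]
  exact ⟨by exact_mod_cast (by nlinarith : a = 1), by exact_mod_cast (by nlinarith : b = 1)⟩

/-- The normalized compression `x ↦ φ(p x p) / φ(p)` of a functional by a projection `p`; it is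
the zero functional when `φ p = 0`. -/
noncomputable def compression (φ : A →L[ℂ] ℂ) (p : A) : A →L[ℂ] ℂ :=
  (φ p)⁻¹ • φ ∘L ContinuousLinearMap.mulLeftRight ℂ A p p

lemma compression_apply (φ : A →L[ℂ] ℂ) (p x : A) :
    compression φ p x = (φ p)⁻¹ * φ (p * x * p) := by
  simp [compression]

lemma isState_compression (hφ : ∀ x : A, 0 ≤ φ (star x * x)) (hp : IsStarProjection p)
    (h : φ p ≠ 0) : IsState (compression φ p) := by
  refine isState_iff_map_one.mpr ⟨fun x => ?_, ?_⟩
  · rw [compression_apply]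
    refine mul_nonneg (inv_nonneg.mpr (map_nonneg_of_isStarProjection hφ hp)) ?_
    simpa only [star_mul, hp.isSelfAdjoint.star_eq, mul_assoc] using hφ (x * p)
  · rw [compression_apply, mul_one, hp.isIdempotentElem.eq, inv_mul_cancel₀ h]

lemma map_eq_smul_compression_add (hp : IsStarProjection p) (hcomm : ∀ x, φ (p * x) = φ (x * p))
    (h : φ p ≠ 0) (h' : φ (1 - p) ≠ 0) (x : A) :
    φ x = φ p • compression φ p x + φ (1 - p) • compression φ (1 - p) x := by
  have hcorner : φ (p * x * p) = φ (x * p) := by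
    rw [mul_assoc, hcomm, mul_assoc, hp.isIdempotentElem.eq]
  have hcorner' : φ ((1 - p) * x * (1 - p)) = φ (x * (1 - p)) := by
    simp only [sub_mul, mul_sub, one_mul, mul_one, map_sub, hcomm, hcorner]
    ring
  rw [compression_apply, compression_apply, smul_eq_mul, smul_eq_mul, mul_inv_cancel_left₀ h,
    mul_inv_cancel_left₀ h', hcorner, hcorner', ← map_add, ← mul_add, add_sub_cancel, mul_one]

end State

section InvariantState

variable {A : Type*} [CStarAlgebra A] {α : A ≃⋆ₐ[ℂ] A} {φ : A →L[ℂ] ℂ} {p : A}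

/-- The `α`-invariant states. As in the weak* topology, they are viewed inside `A → ℂ`, the space
of functions with the topology of pointwise convergence. -/
def invariantStates (α : A ≃⋆ₐ[ℂ] A) : Set (A → ℂ) :=
  {f | ∃ φ : A →L[ℂ] ℂ, IsState φ ∧ (∀ x, φ (α x) = φ x) ∧ f = ⇑φ}

/-- The `α`-invariant pure states, viewed inside `A → ℂ`. -/
def invariantPureStates (α : A ≃⋆ₐ[ℂ] A) : Set (A → ℂ) :=
  {f | ∃ φ : A →L[ℂ] ℂ, IsPureState φ ∧ (∀ x, φ (α x) = φ x) ∧ f = ⇑φ}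

lemma convex_invariantStates (α : A ≃⋆ₐ[ℂ] A) : Convex ℝ (invariantStates α) := by
  rintro _ ⟨φ, hφ, hφα, rfl⟩ _ ⟨ψ, hψ, hψα, rfl⟩ a b ha hb hab
  obtain rfl : b = 1 - a := by linarith
  exact ⟨a • φ + (1 - a) • ψ, hφ.convex_combination hψ ha (by linarith),
    fun x => by simp [hφα, hψα], rfl⟩

lemma IsPureState.extremeIn_invariantStates (hφ : IsPureState φ) (hφα : ∀ x, φ (α x) = φ x) :
    ExtremeIn (invariantStates α) φ := by
  refine ⟨⟨φ, hφ.1, hφα, rfl⟩, ?_⟩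
  rintro _ ⟨ψ₁, h₁, -, rfl⟩ _ ⟨ψ₂, h₂, -, rfl⟩ t ht0 ht1 h
  obtain ⟨rfl, rfl⟩ := hφ.2 ψ₁ ψ₂ t h₁ h₂ ht0 ht1 (DFunLike.coe_injective h)
  exact ⟨rfl, rfl⟩

lemma compression_mem_invariantStates (hφ : IsState φ) (hφα : ∀ x, φ (α x) = φ x)
    (hp : IsStarProjection p) (hpα : α p = p) (h : φ p ≠ 0) :
    ⇑(compression φ p) ∈ invariantStates α := by
  refine ⟨_, isState_compression hφ.1 hp h, fun x => ?_, rfl⟩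
  rw [compression_apply, compression_apply, ← hφα (p * x * p), map_mul α, map_mul α, hpα]

/-- If `0 < φ p < 1`, the compressions of `φ` by `p` and `1 - p` decompose `φ`. -/
lemma map_eq_zero_or_one_of_extremeIn_invariantStates (hφ : ExtremeIn (invariantStates α) φ)
    (hp : IsStarProjection p) (hpα : α p = p) (hcomm : ∀ x, φ (p * x) = φ (x * p)) :
    φ p = 0 ∨ φ p = 1 := by
  obtain ⟨⟨φ', hstate, hinv, hφ'⟩, hext⟩ := hφ
  obtain rfl := DFunLike.coe_injective hφ'
  obtain ⟨r, ⟨hr0, hr1⟩, hr⟩ := hstate.exists_map_eq_ofReal hp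
  have hr' : φ (1 - p) = (1 - r : ℝ) := by rw [map_sub, hstate.map_one, hr]; norm_cast
  by_contra! hne
  have hr_ne_zero : r ≠ 0 := by rintro rfl; exact hne.1 (by simpa using hr)
  have hr_ne_one : r ≠ 1 := by rintro rfl; exact hne.2 (by simpa using hr)
  have hp' : φ (1 - p) ≠ 0 := by
    rw [hr', Complex.ofReal_ne_zero]
    exact sub_ne_zero.mpr hr_ne_one.symm
  have hdecomp : (φ : A → ℂ) = r • ⇑(compression φ p) + (1 - r) • ⇑(compression φ (1 - p)) := by
    funext x
    simpa only [hr, hr', Complex.coe_smul, Pi.add_apply, Pi.smul_apply] using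
      map_eq_smul_compression_add hp hcomm hne.1 hp' x
  have heq := (hext _ (compression_mem_invariantStates hstate hinv hp hpα hne.1) _
    (compression_mem_invariantStates hstate hinv hp.one_sub (by rw [map_sub, map_one, hpα]) hp')
    r (hr0.lt_of_ne' hr_ne_zero) (hr1.lt_of_ne hr_ne_one) hdecomp).1
  have hone : compression φ p p = 1 := by
    rw [compression_apply, hp.isIdempotentElem.eq, hp.isIdempotentElem.eq, inv_mul_cancel₀ hne.1]
  exact hne.2 (by rw [← hone, heq])

end InvariantState

section Phase

/-- The angle `∑ k, s k * θ k`, modulo `1`, of the diagonal entry of `diagUnitary θ n` at the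
word `s`. -/
noncomputable def wordAngle (θ : ℕ → ℝ) {n : ℕ} (s : Fin n → Fin 2) : UnitAddCircle :=
  ((∑ k, (s k : ℕ) * θ k : ℝ) : UnitAddCircle)

lemma wordAngle_injective {θ : ℕ → ℝ}
    (hθ : LinearIndependent ℚ (fun o : Option ℕ => Option.elim o (1 : ℝ) θ)) (n : ℕ) :
    Function.Injective (wordAngle θ : (Fin n → Fin 2) → UnitAddCircle) := by
  intro s t hst
  rw [wordAngle, wordAngle, ← sub_eq_zero, ← AddCircle.coe_sub, AddCircle.coe_eq_zero_iff] at hst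
  obtain ⟨m, hm⟩ := hst
  have hθn := Fintype.linearIndependent_iff.mp
    (hθ.comp (Option.map Fin.val) (Option.map_injective (Fin.val_injective (n := n))))
    (fun o => o.elim (-m : ℚ) fun k => (s k : ℕ) - (t k : ℕ))
  have hzero := hθn <| by
    simp only [Fintype.sum_option, Function.comp_apply, Option.map_none, Option.map_some,
      Option.elim_none, Option.elim_some, Rat.smul_def]
    push_cast
    simp only [sub_mul, Finset.sum_sub_distrib, ← hm]
    simp
  funext k
  exact Fin.ext (by exact_mod_cast sub_eq_zero.mp (hzero (some k)))

lemma diagUnitary_eq_diagonal_toCircle (θ : ℕ → ℝ) (n : ℕ) :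
    diagUnitary θ n = Matrix.diagonal fun s => ((wordAngle θ s).toCircle : ℂ) := by
  simp only [diagUnitary, wordAngle, AddCircle.toCircle_apply_mk, Circle.coe_exp]
  congr! 3
  push_cast
  ring

lemma diagUnitary_conj_apply (θ : ℕ → ℝ) {n : ℕ} (x : M2pow n) (s t : Fin n → Fin 2) :
    (diagUnitary θ n * x * star (diagUnitary θ n)) s t =
      ((wordAngle θ s - wordAngle θ t).toCircle : ℂ) * x s t := by
  rw [diagUnitary_eq_diagonal_toCircle, Matrix.star_eq_conjTranspose,
    Matrix.diagonal_conjTranspose, Matrix.mul_diagonal, Matrix.diagonal_mul, sub_eq_add_neg,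
    AddCircle.toCircle_add, AddCircle.toCircle_neg, Circle.coe_mul, Circle.coe_inv_eq_conj,
    Pi.star_apply, starRingEnd_apply]
  ring

lemma exists_diagUnitary_conj_sub_eq {θ : ℕ → ℝ} {n : ℕ}
    (hθ : Function.Injective (wordAngle θ : (Fin n → Fin 2) → UnitAddCircle)) (x : M2pow n) :
    ∃ w, diagUnitary θ n * w * star (diagUnitary θ n) - w = x - Matrix.diagonal x.diag := by
  -- On the diagonal the denominator is zero, hence so is the quotient.
  refine ⟨Matrix.of fun s t => x s t / ((wordAngle θ s - wordAngle θ t).toCircle - 1), ?_⟩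
  ext s t
  rw [Matrix.sub_apply, Matrix.sub_apply, diagUnitary_conj_apply, Matrix.of_apply]
  obtain rfl | hst := eq_or_ne s t
  · simp
  · have hphase : ((wordAngle θ s - wordAngle θ t).toCircle : ℂ) - 1 ≠ 0 := by
      rw [sub_ne_zero, Ne, Circle.coe_eq_one, ← AddCircle.toCircle_zero,
        (AddCircle.injective_toCircle one_ne_zero).eq_iff, sub_eq_zero]
      exact hθ.ne hst
    rw [Matrix.diagonal_apply_ne _ hst]
    field_simp
    ring

end Phase

section Matrices

lemma m2Embed_apply_self {n : ℕ} (x : M2pow n) (s : Fin (n + 1) → Fin 2) :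
    m2Embed n x s s = x (fun k => s k.castSucc) (fun k => s k.castSucc) := by
  simp [m2Embed]

lemma m2Embed_diagonal {n : ℕ} (d : (Fin n → Fin 2) → ℂ) :
    m2Embed n (Matrix.diagonal d) = Matrix.diagonal fun s => d fun k => s k.castSucc := by
  ext s t
  have hst : s = t ↔ (fun k : Fin n => s k.castSucc) = (fun k => t k.castSucc) ∧
      s (Fin.last n) = t (Fin.last n) := by
    simp [funext_iff, Fin.forall_fin_succ']
  simp [m2Embed, Matrix.diagonal_apply, hst, ite_and]

lemma isStarProjection_single_one {n : Type*} [Fintype n] [DecidableEq n] (s : n) :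
    IsStarProjection (Matrix.single s s (1 : ℂ)) :=
  ⟨by simp [IsIdempotentElem], by simp [IsSelfAdjoint, Matrix.star_eq_conjTranspose]⟩

end Matrices

namespace UHF2Model

variable {A : Type*} [CStarAlgebra A] (M : UHF2Model A)

/-- The image in `A` of the diagonal subalgebra `(ℂ²)^{⊗ n}` of `M₂^{⊗ n}`. -/
def diagonalLevel (n : ℕ) : Set A :=
  M.j n '' {x | ∃ d, x = Matrix.diagonal d}

/-- The minimal diagonal projection of `M₂^{⊗ n}` labelled by the word `s`; under
`⊗ ℂ² = C({0, 1}^ℕ)` it is the indicator function of the cylinder set of `s`. -/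
noncomputable def cylinder (n : ℕ) (s : Fin n → Fin 2) : A :=
  M.j n (Matrix.single s s 1)

lemma range_j_mono : Monotone fun n => Set.range (M.j n) := by
  refine monotone_nat_of_le_succ fun n => ?_
  rintro _ ⟨x, rfl⟩
  exact ⟨m2Embed n x, M.compat n x⟩

lemma diagonalLevel_mono : Monotone M.diagonalLevel := by
  refine monotone_nat_of_le_succ fun n => ?_
  rintro _ ⟨_, ⟨d, rfl⟩, rfl⟩
  exact ⟨_, ⟨_, m2Embed_diagonal d⟩, M.compat n _⟩

lemma induction_of_isClosed {P : A → Prop} (hP : IsClosed {a | P a}) (h : ∀ n x, P (M.j n x))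
    (a : A) : P a :=
  hP.closure_subset_iff.mpr (Set.iUnion_subset fun n => Set.range_subset_iff.mpr (h n)) (M.dense a)

lemma isStarProjection_cylinder (n : ℕ) (s : Fin n → Fin 2) :
    IsStarProjection (M.cylinder n s) :=
  (isStarProjection_single_one s).map (M.j n)

lemma cylinder_mem_diagonalLevel (n : ℕ) (s : Fin n → Fin 2) :
    M.cylinder n s ∈ M.diagonalLevel n :=
  Set.mem_image_of_mem _ ⟨_, (Matrix.diagonal_single s 1).symm⟩

lemma sum_cylinder (n : ℕ) : ∑ s, M.cylinder n s = 1 := by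
  simp only [cylinder]
  rw [← map_sum, Matrix.sum_single_eq_diagonal, Matrix.diagonal_one, map_one]

lemma cylinder_mul_mul_cylinder {n : ℕ} (s : Fin n → Fin 2) (x : M2pow n) :
    M.cylinder n s * M.j n x * M.cylinder n s = x s s • M.cylinder n s := by
  simp only [cylinder]
  rw [← map_mul, ← map_mul, Matrix.single_mul_mul_single, ← map_smul, Matrix.smul_single, one_mul,
    mul_one, smul_eq_mul, mul_one]

lemma cylinder_ne_zero (n : ℕ) (s : Fin n → Fin 2) : M.cylinder n s ≠ 0 := by
  rw [cylinder, map_ne_zero_iff _ (M.inj n)]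
  exact fun h => one_ne_zero (α := ℂ) (by simpa using congrFun₂ h s s)

lemma exists_norm_le_one_map_j_eq {n : ℕ} (s : Fin n → Fin 2) :
    ∃ f : A →L[ℂ] ℂ, ‖f‖ ≤ 1 ∧ ∀ x : M2pow n, f (M.j n x) = x s s := by
  set p := M.cylinder n s
  have hp : IsStarProjection p := M.isStarProjection_cylinder n s
  have hp0 : ‖p‖ ≠ 0 := norm_ne_zero_iff.mpr (M.cylinder_ne_zero n s)
  have hp1 : ‖p‖ = 1 := by
    refine (mul_eq_left₀ hp0).mp ?_
    rw [← CStarRing.norm_star_mul_self, hp.isSelfAdjoint.star_eq, hp.isIdempotentElem.eq]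
  obtain ⟨g, hg, hgp⟩ := exists_dual_vector ℂ p hp0
  refine ⟨g ∘L ContinuousLinearMap.mulLeftRight ℂ A p p, ?_, fun x => ?_⟩
  · calc _ ≤ ‖g‖ * ‖ContinuousLinearMap.mulLeftRight ℂ A p p‖ := g.opNorm_comp_le _
      _ ≤ ‖g‖ * (‖p‖ * ‖p‖) := by
        gcongr
        exact ContinuousLinearMap.opNorm_mulLeftRight_apply_apply_le ℂ A p p
      _ = 1 := by rw [hg, hp1, one_mul, one_mul]
  · rw [ContinuousLinearMap.comp_apply, ContinuousLinearMap.mulLeftRight_apply,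
      cylinder_mul_mul_cylinder, map_smul, hgp, hp1]
    simp

/-- `φ` is the product functional `x ↦ Tr(x ⊗ₖ Dₖ)` with `Dₖ = diag(1, 0)` where `ρ k = 0` and
`Dₖ = diag(0, 1)` where `ρ k = 1`: it evaluates matrices at the diagonal entry `ρ`. -/
def IsProductState (φ : A →L[ℂ] ℂ) (ρ : ℕ → Fin 2) : Prop :=
  ∀ n (x : M2pow n), φ (M.j n x) = x (fun k => ρ k) (fun k => ρ k)

lemma exists_isProductState (ρ : ℕ → Fin 2) : ∃ φ, M.IsProductState φ ρ := by
  let K (n : ℕ) : Set (WeakDual ℂ A) :=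
    WeakDual.toStrongDual ⁻¹' Metric.closedBall (0 : StrongDual ℂ A) 1 ∩
      {f | ∀ x : M2pow n, f (M.j n x) = x (fun k => ρ k) (fun k => ρ k)}
  have hanti (n : ℕ) : K (n + 1) ⊆ K n := fun f hf =>
    ⟨hf.1, fun x => by rw [← M.compat, hf.2, m2Embed_apply_self]; rfl⟩
  have hne (n : ℕ) : (K n).Nonempty := by
    obtain ⟨f, hf, hfj⟩ := M.exists_norm_le_one_map_j_eq fun k : Fin n => ρ k
    exact ⟨StrongDual.toWeakDual f, mem_closedBall_zero_iff.mpr hf, hfj⟩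
  have hball : IsCompact (WeakDual.toStrongDual ⁻¹' Metric.closedBall (0 : StrongDual ℂ A) 1) :=
    WeakDual.isCompact_closedBall 0 1
  have hclosed (n : ℕ) :
      IsClosed {f : WeakDual ℂ A | ∀ x : M2pow n, f (M.j n x) = x (fun k => ρ k) fun k => ρ k} := by
    simp only [Set.ofPred_forall]
    exact isClosed_iInter fun x => isClosed_eq (WeakDual.eval_continuous _) continuous_const
  obtain ⟨φ, hφ⟩ := IsCompact.nonempty_iInter_of_sequence_nonempty_isCompact_isClosed K hanti hne
    (hball.inter_right (hclosed 0)) fun n => hball.isClosed.inter (hclosed n)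
  exact ⟨WeakDual.toStrongDual φ, fun n => (Set.mem_iInter.mp hφ n).2⟩

variable {M} {φ ψ : A →L[ℂ] ℂ} {ρ : ℕ → Fin 2}

lemma map_j_eq_of_map_cylinder_eq_one (hφ : IsState φ) {n : ℕ} {s : Fin n → Fin 2}
    (h : φ (M.cylinder n s) = 1) (x : M2pow n) : φ (M.j n x) = x s s := by
  rw [← hφ.map_mul_mul_of_map_eq_one (M.isStarProjection_cylinder n s) h,
    cylinder_mul_mul_cylinder, map_smul, h, smul_eq_mul, mul_one]

lemma exists_isProductState_of_map_cylinder_eq_zero_or_one (hφ : IsState φ)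
    (h : ∀ n s, φ (M.cylinder n s) = 0 ∨ φ (M.cylinder n s) = 1) :
    ∃ ρ, M.IsProductState φ ρ := by
  have hex (n : ℕ) : ∃ s, φ (M.cylinder n s) = 1 := by
    by_contra! hne
    have hone := hφ.map_one
    rw [← M.sum_cylinder n, map_sum,
      Finset.sum_eq_zero fun s _ => (h n s).resolve_right (hne s)] at hone
    exact zero_ne_one hone
  choose s hs using hex
  have hrestrict (n : ℕ) : (fun k : Fin n => s (n + 1) k.castSucc) = s n := by
    have hone := hs n
    rw [cylinder, ← M.compat, map_j_eq_of_map_cylinder_eq_one hφ (hs (n + 1)), m2Embed_apply_self,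
      Matrix.single_apply] at hone
    by_contra hne
    simp [Ne.symm hne] at hone
  let ρ (k : ℕ) : Fin 2 := s (k + 1) (Fin.last k)
  have hρ (n : ℕ) : s n = fun k : Fin n => ρ k := by
    induction n with
    | zero => exact Subsingleton.elim _ _
    | succ n ih =>
      funext k
      induction k using Fin.lastCases with
      | last => rfl
      | cast k => exact (congrFun (hrestrict n) k).trans (congrFun ih k)
  exact ⟨ρ, fun n x => by rw [map_j_eq_of_map_cylinder_eq_one hφ (hs n), hρ]⟩

namespace IsProductState

protected lemma unique (hφ : M.IsProductState φ ρ) (hψ : M.IsProductState ψ ρ) : φ = ψ :=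
  ContinuousLinearMap.ext <| M.induction_of_isClosed (isClosed_eq φ.continuous ψ.continuous)
    fun n x => (hφ n x).trans (hψ n x).symm

lemma map_cylinder (hφ : M.IsProductState φ ρ) (n : ℕ) (s : Fin n → Fin 2) :
    φ (M.cylinder n s) = if s = fun k : Fin n => ρ k then 1 else 0 := by
  simp only [cylinder, hφ n, Matrix.single_apply, and_self]

lemma isState (hφ : M.IsProductState φ ρ) : IsState φ := by
  refine isState_iff_map_one.mpr ⟨M.induction_of_isClosed ?_ fun n x => ?_, ?_⟩
  · exact isClosed_le continuous_const (by fun_prop)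
  · rw [← map_star, ← map_mul, hφ, Matrix.star_eq_conjTranspose, Matrix.mul_apply]
    exact Finset.sum_nonneg fun i _ => star_mul_self_nonneg (x i _)
  · rw [← map_one (M.j 0), hφ, Matrix.one_apply_eq]

lemma isPureState (hφ : M.IsProductState φ ρ) : IsPureState φ := by
  refine ⟨hφ.isState, fun ψ₁ ψ₂ t h₁ h₂ ht0 ht1 hcomb => ?_⟩
  have hone (n : ℕ) := map_eq_one_of_convex_combination_map_eq_one h₁ h₂
    (M.isStarProjection_cylinder n fun k => ρ k) ht0 ht1
    (by rw [← hcomb, hφ.map_cylinder, if_pos rfl])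
  have hψ₁ : M.IsProductState ψ₁ ρ := fun n => map_j_eq_of_map_cylinder_eq_one h₁ (hone n).1
  have hψ₂ : M.IsProductState ψ₂ ρ := fun n => map_j_eq_of_map_cylinder_eq_one h₂ (hone n).2
  exact ⟨hψ₁.unique hφ, hψ₂.unique hφ⟩

end IsProductState

variable {θ : ℕ → ℝ} {α : A ≃⋆ₐ[ℂ] A}

variable (M θ α) in
/-- `α` is the product action `⊗ Ad diag(1, e^{2πiθ_n})`. -/
def IsProductAction : Prop :=
  ∀ n x, α (M.j n x) = M.j n (diagUnitary θ n * x * star (diagUnitary θ n))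

namespace IsProductAction

variable (hα : M.IsProductAction θ α)
include hα

lemma apply_of_mem_diagonalLevel {n : ℕ} {a : A} (ha : a ∈ M.diagonalLevel n) : α a = a := by
  obtain ⟨_, ⟨d, rfl⟩, rfl⟩ := ha
  rw [hα]
  congr 1
  ext s t
  rw [diagUnitary_conj_apply]
  obtain rfl | hst := eq_or_ne s t
  · simp
  · rw [Matrix.diagonal_apply_ne _ hst, mul_zero]

lemma map_apply_of_isProductState {ρ : ℕ → Fin 2} (hφ : M.IsProductState φ ρ) (x : A) :
    φ (α x) = φ x := by
  have hcont : Continuous α := (StarAlgEquiv.isometry α).continuous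
  refine M.induction_of_isClosed (isClosed_eq (φ.continuous.comp hcont) φ.continuous)
    (fun n x => ?_) x
  rw [Function.comp_apply, hα, hφ, hφ, diagUnitary_conj_apply, sub_self, AddCircle.toCircle_zero,
    Circle.coe_one, one_mul]

lemma isProductState_mem_invariantStates {ρ : ℕ → Fin 2} (hφ : M.IsProductState φ ρ) :
    ⇑φ ∈ invariantStates α :=
  ⟨φ, hφ.isState, hα.map_apply_of_isProductState hφ, rfl⟩

variable (hθ : ∀ n, Function.Injective (wordAngle θ : (Fin n → Fin 2) → UnitAddCircle))
include hθ

lemma exists_apply_sub_eq {n : ℕ} (x : M2pow n) :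
    ∃ w, α w - w = M.j n x - M.j n (Matrix.diagonal x.diag) := by
  obtain ⟨w, hw⟩ := exists_diagUnitary_conj_sub_eq (hθ n) x
  exact ⟨M.j n w, by rw [hα, ← map_sub, hw, map_sub]⟩

lemma fixedPoints_eq : {a : A | α a = a} = closure (⋃ n, M.diagonalLevel n) := by
  have hcont : Continuous α := (StarAlgEquiv.isometry α).continuous
  refine Set.Subset.antisymm (fun a (ha : α a = a) => ?_) <|
    closure_minimal (Set.iUnion_subset fun n a => hα.apply_of_mem_diagonalLevel)
      (isClosed_eq hcont continuous_id)
  refine Metric.mem_closure_iff.mpr fun ε hε => ?_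
  obtain ⟨_, hb, hab⟩ := Metric.mem_closure_iff.mp (M.dense a) ε hε
  obtain ⟨n, x, rfl⟩ := Set.mem_iUnion.mp hb
  have hd : M.j n (Matrix.diagonal x.diag) ∈ M.diagonalLevel n := Set.mem_image_of_mem _ ⟨_, rfl⟩
  refine ⟨_, Set.mem_iUnion.mpr ⟨n, hd⟩, ?_⟩
  obtain ⟨w, hw⟩ := hα.exists_apply_sub_eq hθ x
  calc dist a (M.j n (Matrix.diagonal x.diag)) = ‖a - M.j n (Matrix.diagonal x.diag)‖ :=
        dist_eq_norm _ _
    _ ≤ ‖a - M.j n (Matrix.diagonal x.diag) - (α w - w)‖ :=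
        norm_le_norm_sub_apply_sub_self α (fun y => (StarAlgEquiv.norm_map α y).le)
          (by rw [map_sub, ha, hα.apply_of_mem_diagonalLevel hd]) w
    _ = dist a (M.j n x) := by rw [hw, sub_sub_sub_cancel_right, dist_eq_norm]
    _ < ε := hab

lemma map_j_congr_of_diag_eq (hφα : ∀ x, φ (α x) = φ x) {n : ℕ} {x y : M2pow n}
    (hxy : x.diag = y.diag) : φ (M.j n x) = φ (M.j n y) := by
  obtain ⟨w, hw⟩ := hα.exists_apply_sub_eq hθ (x - y)
  have hzero := congrArg φ hw
  rw [Matrix.diag_sub, hxy, sub_self, Pi.zero_def, Matrix.diagonal_zero, map_zero, sub_zero,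
    map_sub, hφα, sub_self, map_sub, map_sub] at hzero
  exact sub_eq_zero.mp hzero.symm

lemma map_mul_comm_of_apply_eq (hφα : ∀ x, φ (α x) = φ x) {a : A} (ha : α a = a) (x : A) :
    φ (a * x) = φ (x * a) := by
  have hmem : a ∈ closure (⋃ n, M.diagonalLevel n) := hα.fixedPoints_eq hθ ▸ ha
  refine closure_minimal (t := {a | φ (a * x) = φ (x * a)}) (Set.iUnion_subset fun m b hb => ?_)
    (isClosed_eq (by fun_prop) (by fun_prop)) hmem
  refine M.induction_of_isClosed (P := fun x => φ (b * x) = φ (x * b))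
    (isClosed_eq (by fun_prop) (by fun_prop)) (fun n y => ?_) x
  obtain ⟨_, ⟨d, rfl⟩, rfl⟩ := M.diagonalLevel_mono (le_max_left m n) hb
  obtain ⟨z, hz⟩ := M.range_j_mono (le_max_right m n) (Set.mem_range_self y)
  rw [← hz, ← map_mul, ← map_mul]
  refine hα.map_j_congr_of_diag_eq hθ hφα (funext fun s => ?_)
  rw [Matrix.diag_apply, Matrix.diag_apply, Matrix.diagonal_mul, Matrix.mul_diagonal, mul_comm]

lemma exists_isProductState_of_extremeIn (hφ : ExtremeIn (invariantStates α) φ) :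
    ∃ ρ, M.IsProductState φ ρ := by
  obtain ⟨φ', hstate, hφα, hφ'⟩ := hφ.1
  obtain rfl := DFunLike.coe_injective hφ'
  refine exists_isProductState_of_map_cylinder_eq_zero_or_one hstate fun n s => ?_
  have hfixed := hα.apply_of_mem_diagonalLevel (M.cylinder_mem_diagonalLevel n s)
  exact map_eq_zero_or_one_of_extremeIn_invariantStates hφ (M.isStarProjection_cylinder n s) hfixed
    (hα.map_mul_comm_of_apply_eq hθ hφα hfixed)

lemma extremeIn_invariantStates_iff {f : A → ℂ} : ExtremeIn (invariantStates α) f ↔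
    ∃ (ρ : ℕ → Fin 2) (φ : A →L[ℂ] ℂ), f = ⇑φ ∧ IsState φ ∧ M.IsProductState φ ρ := by
  constructor
  · intro hf
    obtain ⟨φ, hstate, -, rfl⟩ := hf.1
    obtain ⟨ρ, hρ⟩ := hα.exists_isProductState_of_extremeIn hθ hf
    exact ⟨ρ, φ, rfl, hstate, hρ⟩
  · rintro ⟨ρ, φ, rfl, -, hρ⟩
    exact hρ.isPureState.extremeIn_invariantStates (hα.map_apply_of_isProductState hρ)

lemma closure_invariantPureStates_subset : closure (invariantPureStates α) ⊆
    {f | ∀ n s, f (M.cylinder n s) = 0 ∨ f (M.cylinder n s) = 1} := by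
  refine closure_minimal ?_ ?_
  · rintro _ ⟨φ, hpure, hφα, rfl⟩ n s
    obtain ⟨ρ, hρ⟩ :=
      hα.exists_isProductState_of_extremeIn hθ (hpure.extremeIn_invariantStates hφα)
    rw [hρ.map_cylinder]
    exact (ite_eq_or_eq _ _ _).symm
  · simp only [Set.ofPred_forall]
    exact isClosed_iInter fun n => isClosed_iInter fun s =>
      (isClosed_eq (continuous_apply _) continuous_const).union
        (isClosed_eq (continuous_apply _) continuous_const)

lemma closure_invariantPureStates_inter_subset :
    closure (invariantPureStates α) ∩ invariantStates α ⊆ invariantPureStates α := by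
  rintro _ ⟨hclosure, φ, hstate, hφα, rfl⟩
  obtain ⟨ρ, hρ⟩ := exists_isProductState_of_map_cylinder_eq_zero_or_one hstate
    (hα.closure_invariantPureStates_subset hθ hclosure)
  exact ⟨φ, hρ.isPureState, hφα, rfl⟩

lemma not_invariantStates_subset_closure :
    ¬ invariantStates α ⊆ closure (invariantPureStates α) := by
  intro hdense
  obtain ⟨φ, hφ⟩ := M.exists_isProductState fun _ => 0
  obtain ⟨ψ, hψ⟩ := M.exists_isProductState fun _ => 1
  have hmix : (1 / 2 : ℝ) • ⇑φ + (1 / 2 : ℝ) • ⇑ψ ∈ invariantStates α :=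
    convex_invariantStates α (hα.isProductState_mem_invariantStates hφ)
      (hα.isProductState_mem_invariantStates hψ) (by norm_num) (by norm_num) (by norm_num)
  have hvalue := hα.closure_invariantPureStates_subset hθ (hdense hmix) 1 fun _ => 0
  simp [hφ.map_cylinder, hψ.map_cylinder, funext_iff] at hvalue

end IsProductAction

end UHF2Model

theorem uhf_product_action_invariant_pure_states_closed_general
    {A : Type*} [CStarAlgebra A] (M : UHF2Model A) (θ : ℕ → ℝ)
    (hθ : ∀ n, Function.Injective (wordAngle θ : (Fin n → Fin 2) → UnitAddCircle))
    (α : A ≃⋆ₐ[ℂ] A) (hα : M.IsProductAction θ α) :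
    {a : A | α a = a} = closure (⋃ n, M.diagonalLevel n) ∧
    (∀ f : A → ℂ, ExtremeIn (invariantStates α) f ↔
      ∃ (ρ : ℕ → Fin 2) (φ : A →L[ℂ] ℂ), f = ⇑φ ∧ IsState φ ∧ M.IsProductState φ ρ) ∧
    (∀ φ : A →L[ℂ] ℂ, ExtremeIn (invariantStates α) φ → IsPureState φ) ∧
    closure (invariantPureStates α) ∩ invariantStates α ⊆ invariantPureStates α ∧
    ¬ invariantStates α ⊆ closure (invariantPureStates α) := by
  refine ⟨hα.fixedPoints_eq hθ, fun _ => hα.extremeIn_invariantStates_iff hθ,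
    fun φ hφ => ?_, hα.closure_invariantPureStates_inter_subset hθ,
    hα.not_invariantStates_subset_closure hθ⟩
  obtain ⟨ρ, hρ⟩ := hα.exists_isProductState_of_extremeIn hθ hφ
  exact hρ.isPureState

/-- **Example 2.6**: for the product-type action `α = ⊗ Ad diag(1, e^{2πiθ_n})` on the UHF
algebra `⊗ M₂`, with rationally independent irrational `θ_n`, the fixed point algebra is the
diagonal maximal abelian subalgebra, the extremal invariant states are exactly the pure product
`0–1` states, every extremal invariant state is pure, and the invariant pure states form a
weak*-closed, non-dense subset of the invariant states. -/
theorem uhf_product_action_invariant_pure_states_closed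
    {A : Type*} [CStarAlgebra A] (M : UHF2Model A)
    (θ : ℕ → ℝ)
    (hθ : LinearIndependent ℚ (fun o : Option ℕ => Option.elim o (1 : ℝ) θ))
    (α : A ≃⋆ₐ[ℂ] A)
    (hα : ∀ n x, α (M.j n x) = M.j n (diagUnitary θ n * x * star (diagUnitary θ n))) :
    -- the fixed point algebra is the diagonal subalgebra `⊗_{n=1}^∞ ℂ²`
    ({a : A | α a = a} =
      closure (⋃ n, (M.j n) '' {x : M2pow n | ∃ d, x = Matrix.diagonal d})) ∧
    -- the extremal invariant states are exactly the pure product `0–1` states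
    (∀ f : A → ℂ,
      ExtremeIn {f : A → ℂ | ∃ φ : A →L[ℂ] ℂ, IsState φ ∧ (∀ x, φ (α x) = φ x) ∧ f = ⇑φ} f ↔
      ∃ (ρ : ℕ → Fin 2) (φ : A →L[ℂ] ℂ), f = ⇑φ ∧ IsState φ ∧
        ∀ n (x : M2pow n), φ (M.j n x) = x (fun k => ρ (k : ℕ)) (fun k => ρ (k : ℕ))) ∧
    -- every extremal invariant state is pure
    (∀ φ : A →L[ℂ] ℂ, IsState φ → (∀ x, φ (α x) = φ x) →
      ExtremeIn {f : A → ℂ | ∃ ψ : A →L[ℂ] ℂ, IsState ψ ∧ (∀ x, ψ (α x) = ψ x) ∧ f = ⇑ψ} ⇑φ →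
      IsPureState φ) ∧
    -- the invariant pure states are weak*-closed in the invariant states
    (closure {f : A → ℂ | ∃ φ : A →L[ℂ] ℂ, IsPureState φ ∧ (∀ x, φ (α x) = φ x) ∧ f = ⇑φ} ∩
        {f : A → ℂ | ∃ φ : A →L[ℂ] ℂ, IsState φ ∧ (∀ x, φ (α x) = φ x) ∧ f = ⇑φ} ⊆
      {f : A → ℂ | ∃ φ : A →L[ℂ] ℂ, IsPureState φ ∧ (∀ x, φ (α x) = φ x) ∧ f = ⇑φ}) ∧
    -- and they are not weak*-dense in the invariant states
    ¬ ({f : A → ℂ | ∃ φ : A →L[ℂ] ℂ, IsState φ ∧ (∀ x, φ (α x) = φ x) ∧ f = ⇑φ} ⊆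
      closure {f : A → ℂ | ∃ φ : A →L[ℂ] ℂ, IsPureState φ ∧ (∀ x, φ (α x) = φ x) ∧ f = ⇑φ}) := by
  obtain ⟨hfix, hiff, hpure, hclosed, hdense⟩ :=
    uhf_product_action_invariant_pure_states_closed_general M θ (wordAngle_injective hθ) α hα
  exact ⟨hfix, hiff, fun φ _ _ => hpure φ, hclosed, hdense⟩
end

section
/- Let A be a unital C*-algebra which is not prime, 𝔄 = ⊗_{n=−∞}^{∞} A the two-sided infinite (minimal) tensor product of copies of A, and α the shift automorphism of 𝔄. Then there exists an α-invariant state ω on 𝔄 which cannot be approximated in the weak*-topology by pure states of 𝔄; in particular the α-invariant pure states are not weak*-dense in the α-invariant states. -/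
open scoped ComplexOrder

/-- A prime C*-algebra: any two nonzero closed two-sided ideals have nonzero intersection. -/
def IsPrimeCStar (A : Type*) [CStarAlgebra A] : Prop :=
  ∀ I J : TwoSidedIdeal A, IsClosed (I : Set A) → IsClosed (J : Set A) →
    I ≠ ⊥ → J ≠ ⊥ → I ⊓ J ≠ ⊥

/-- A model of the two-sided infinite *minimal* tensor product `⊗_{n=-∞}^∞ A` of copies of a
unital C*-algebra `A`, together with the shift automorphism.  It is presented by commuting
unital embeddings `e n : A → T`, `n ∈ ℤ`, with dense combined range; the existence of product
states and the fact that product states separate the positive cone single out the *minimal*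
tensor product among all C*-algebras generated by commuting copies of `A`. -/
structure ShiftTensorModel (A : Type*) [CStarAlgebra A] (T : Type*) [CStarAlgebra T] where
  e : ℤ → A →⋆ₐ[ℂ] T
  inj : ∀ n, Function.Injective (e n)
  commutes : ∀ m n : ℤ, m ≠ n → ∀ x y : A, e m x * e n y = e n y * e m x
  generating : (StarAlgebra.adjoin ℂ (⋃ n : ℤ, Set.range (e n))).topologicalClosure = ⊤
  shift : T ≃⋆ₐ[ℂ] T
  shift_apply : ∀ n x, shift (e n x) = e (n + 1) x
  prodState : ∀ φ : ℤ → (A →L[ℂ] ℂ), (∀ n, IsState (φ n)) →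
    ∃ Φ : T →L[ℂ] ℂ, IsState Φ ∧ ∀ (l : List ℤ), l.Nodup → ∀ a : ℤ → A,
      Φ ((l.map fun i => e i (a i)).prod) = (l.map fun i => φ i (a i)).prod
  minimality : ∀ w : T, (∃ y : T, w = star y * y) → w ≠ 0 →
    ∃ (φ : ℤ → (A →L[ℂ] ℂ)) (Φ : T →L[ℂ] ℂ), (∀ n, IsState (φ n)) ∧ IsState Φ ∧ Φ w ≠ 0 ∧
      ∀ (l : List ℤ), l.Nodup → ∀ a : ℤ → A,
        Φ ((l.map fun i => e i (a i)).prod) = (l.map fun i => φ i (a i)).prod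

/-!
If `A` is not prime, there are nonzero `a, b : A` with `a A b = 0`. Choose a state `φ` of `A` with
`φ (a* a) ≠ 0` and `φ (b b*) ≠ 0`. The product state `Φ = ⊗ φ` is shift-invariant and restricts to
`φ` on each copy of `A`.

Since the copies of `A` commute, `p = e₀ a` and `q = e₀ b` satisfy `p T q = 0`. For any functional
`x ↦ ⟪ξ, π x ξ⟫`, splitting `ξ` along a closed invariant subspace annihilated by `π (q*)` and
containing the range of `π (p*)` writes it as a sum of two positive functionals, one vanishing at
`q q*` and the other at `p* p`. If the functional is a pure state, both summands are multiples of
it, so it vanishes at `p* p` or at `q q*`. Hence `f (p* p) f (q q*) = 0` on the weak* closure of the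
pure states, whereas `Φ (p* p) Φ (q q*) = φ (a* a) φ (b b*) ≠ 0`.
-/

open scoped CStarAlgebra

section PositiveFunctional

/-- Positivity of a functional on a C*-algebra. It is tested on the elements `star x * x`, as in
`IsState`, since no order on the algebra is fixed. -/
def IsPositiveFunctional {A : Type*} [CStarAlgebra A] (f : A →L[ℂ] ℂ) : Prop :=
  ∀ x : A, 0 ≤ f (star x * x)

variable {A : Type*} [CStarAlgebra A]

section VectorFunctional

variable {H : Type*} [NormedAddCommGroup H] [InnerProductSpace ℂ H] [CompleteSpace H]
  (π : A →⋆ₐ[ℂ] (H →L[ℂ] H))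

/-- The (unnormalised) functional `x ↦ ⟪ξ, π x ξ⟫` attached to a vector `ξ` of a
representation `π`. -/
noncomputable def vectorFunctional (ξ : H) : A →L[ℂ] ℂ :=
  innerSL ℂ ξ ∘L ContinuousLinearMap.apply ℂ H ξ ∘L
    { toLinearMap := (π : A →ₗ[ℂ] H →L[ℂ] H), cont := map_continuous π }

theorem vectorFunctional_apply (ξ : H) (x : A) :
    vectorFunctional π ξ x = inner ℂ ξ (π x ξ) := rfl

theorem vectorFunctional_star_mul_self (ξ : H) (x : A) :
    vectorFunctional π ξ (star x * x) = (‖π x ξ‖ : ℂ) ^ 2 := by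
  rw [vectorFunctional_apply, map_mul, map_star, mul_apply_eq_comp,
    ContinuousLinearMap.star_eq_adjoint, ContinuousLinearMap.adjoint_inner_right,
    inner_self_eq_norm_sq_to_K]
  rfl

theorem vectorFunctional_one (ξ : H) : vectorFunctional π ξ 1 = (‖ξ‖ : ℂ) ^ 2 := by
  simpa using vectorFunctional_star_mul_self π ξ 1

theorem isPositiveFunctional_vectorFunctional (ξ : H) :
    IsPositiveFunctional (vectorFunctional π ξ) := fun x ↦ by
  rw [vectorFunctional_star_mul_self]
  norm_cast
  positivity

theorem norm_vectorFunctional_le (ξ : H) : ‖vectorFunctional π ξ‖ ≤ ‖ξ‖ ^ 2 :=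
  ContinuousLinearMap.opNorm_le_bound _ (by positivity) fun x ↦
    calc ‖inner ℂ ξ (π x ξ)‖ ≤ ‖ξ‖ * ‖π x ξ‖ := norm_inner_le_norm _ _
      _ ≤ ‖ξ‖ * (‖π x‖ * ‖ξ‖) := by gcongr; exact (π x).le_opNorm ξ
      _ ≤ ‖ξ‖ * (‖x‖ * ‖ξ‖) := by gcongr; exact NonUnitalStarAlgHom.norm_apply_le π x
      _ = ‖ξ‖ ^ 2 * ‖x‖ := by ring

theorem vectorFunctional_add_of_mem_orthogonal {K : Submodule ℂ H}
    (hK : ∀ x : A, ∀ η ∈ K, π x η ∈ K) {η ζ : H} (hη : η ∈ K) (hζ : ζ ∈ Kᗮ) :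
    vectorFunctional π (η + ζ) = vectorFunctional π η + vectorFunctional π ζ := by
  ext x
  have hζη : inner ℂ ζ (π x η) = 0 := Submodule.inner_left_of_mem_orthogonal (hK x η hη) hζ
  have hηζ : inner ℂ η (π x ζ) = 0 := by
    rw [← ContinuousLinearMap.adjoint_inner_left, ← ContinuousLinearMap.star_eq_adjoint,
      ← map_star]
    exact Submodule.inner_right_of_mem_orthogonal (hK (star x) η hη) hζ
  simp [vectorFunctional_apply, hζη, hηζ]

/-- The two vectors are the components of `ξ` along and orthogonal to the invariant subspace
`{η | π (star q * c) η = 0 for all c}`, which contains the range of `π (star p)`. -/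
theorem exists_vectorFunctional_eq_add (ξ : H) {p q : A} (hpq : ∀ c, p * c * q = 0) :
    ∃ η ζ : H, vectorFunctional π ξ = vectorFunctional π η + vectorFunctional π ζ ∧
      π (star q) η = 0 ∧ π p ζ = 0 := by
  let K : Submodule ℂ H := ⨅ c : A, (π (star q * c)).ker
  have mem_K (η : H) : η ∈ K ↔ ∀ c, π (star q * c) η = 0 := by simp [K]
  have hK (x : A) (η : H) (hη : η ∈ K) : π x η ∈ K := by
    rw [mem_K] at hη ⊢
    intro c
    simpa [mul_assoc] using hη (c * x)
  have range_le_K : (π (star p)).range ≤ K := by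
    rintro _ ⟨η, rfl⟩
    refine (mem_K _).2 fun c ↦ ?_
    have hqp : star q * c * star p = 0 := by simpa [mul_assoc] using congrArg star (hpq (star c))
    change (π (star q * c) * π (star p)) η = 0
    rw [← map_mul, hqp, map_zero, zero_apply]
  have K_orthogonal_le : Kᗮ ≤ (π p).ker := by
    refine (Submodule.orthogonal_le range_le_K).trans_eq ?_
    rw [ContinuousLinearMap.orthogonal_range, ← ContinuousLinearMap.star_eq_adjoint, ← map_star,
      star_star]
  have : CompleteSpace K := by
    refine IsClosed.completeSpace_coe (hs := ?_)
    simpa only [K, Submodule.coe_iInf] using isClosed_iInter fun c ↦ (π (star q * c)).isClosed_ker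
  obtain ⟨η, hη, ζ, hζ, hξ⟩ := K.exists_add_mem_mem_orthogonal ξ
  refine ⟨η, ζ, ?_, by simpa using (mem_K η).1 hη 1, K_orthogonal_le hζ⟩
  rw [hξ, vectorFunctional_add_of_mem_orthogonal π hK hη hζ]

end VectorFunctional

namespace IsPositiveFunctional

theorem exists_eq_vectorFunctional.{u} {A : Type u} [CStarAlgebra A] {f : A →L[ℂ] ℂ}
    (hf : IsPositiveFunctional f) :
    ∃ (H : Type u) (_ : NormedAddCommGroup H) (_ : InnerProductSpace ℂ H) (_ : CompleteSpace H)
      (π : A →⋆ₐ[ℂ] (H →L[ℂ] H)) (ξ : H), f = vectorFunctional π ξ := by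
  let _ := CStarAlgebra.spectralOrder A
  have := CStarAlgebra.spectralOrderedRing A
  let F : A →ₚ[ℂ] ℂ := PositiveLinearMap.mk₀ f.toLinearMap fun x hx ↦ by
    obtain ⟨y, rfl⟩ := CStarAlgebra.nonneg_iff_eq_star_mul_self.mp hx
    exact hf y
  refine ⟨F.GNS, inferInstance, inferInstance, inferInstance, F.gnsStarAlgHom,
    (F.toPreGNS 1 : F.PreGNS), ?_⟩
  ext x
  change F x = _
  simp [vectorFunctional_apply, UniformSpace.Completion.inner_coe,
    PositiveLinearMap.preGNS_inner_def]

variable {f g : A →L[ℂ] ℂ}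

theorem coe_norm_eq_apply_one (hf : IsPositiveFunctional f) : (‖f‖ : ℂ) = f 1 := by
  obtain ⟨H, _, _, _, π, ξ, rfl⟩ := hf.exists_eq_vectorFunctional
  rw [vectorFunctional_one, ← Complex.ofReal_pow]
  congr 1
  refine (norm_vectorFunctional_le π ξ).antisymm ?_
  have norm_one_le : ‖(1 : A)‖ ≤ 1 := by
    nontriviality A
    exact CStarRing.norm_one.le
  simpa [vectorFunctional_one] using (vectorFunctional π ξ).le_of_opNorm_le_of_le le_rfl norm_one_le

protected theorem add (hf : IsPositiveFunctional f) (hg : IsPositiveFunctional g) :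
    IsPositiveFunctional (f + g) :=
  fun x ↦ add_nonneg (hf x) (hg x)

protected theorem smul (hf : IsPositiveFunctional f) {r : ℝ} (hr : 0 ≤ r) :
    IsPositiveFunctional (r • f) :=
  fun x ↦ smul_nonneg hr (hf x)

theorem norm_add_eq (hf : IsPositiveFunctional f) (hg : IsPositiveFunctional g) :
    ‖f + g‖ = ‖f‖ + ‖g‖ := by
  apply Complex.ofReal_injective
  rw [Complex.ofReal_add, hf.coe_norm_eq_apply_one, hg.coe_norm_eq_apply_one,
    (hf.add hg).coe_norm_eq_apply_one, add_apply]

theorem isState_inv_norm_smul (hf : IsPositiveFunctional f) (hf₀ : f ≠ 0) :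
    IsState (‖f‖⁻¹ • f) :=
  ⟨hf.smul (by positivity), by simp [norm_smul, hf₀]⟩

theorem exists_eq_add_of_forall_mul_mul_eq_zero (hf : IsPositiveFunctional f) {p q : A}
    (hpq : ∀ c, p * c * q = 0) :
    ∃ g h : A →L[ℂ] ℂ, IsPositiveFunctional g ∧ IsPositiveFunctional h ∧ f = g + h ∧
      g (q * star q) = 0 ∧ h (star p * p) = 0 := by
  obtain ⟨H, _, _, _, π, ξ, rfl⟩ := hf.exists_eq_vectorFunctional
  obtain ⟨η, ζ, hadd, hη, hζ⟩ := exists_vectorFunctional_eq_add π ξ hpq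
  refine ⟨_, _, isPositiveFunctional_vectorFunctional π η,
    isPositiveFunctional_vectorFunctional π ζ, hadd, ?_, ?_⟩
  · simpa [hη] using vectorFunctional_star_mul_self π η (star q)
  · simp [vectorFunctional_star_mul_self, hζ]

end IsPositiveFunctional

end PositiveFunctional

section PureState

variable {A : Type*} [CStarAlgebra A]

theorem IsState.exists_apply_star_mul_self_ne_zero {φ ψ : A →L[ℂ] ℂ} (hφ : IsState φ)
    (hψ : IsState ψ) {x y : A} (hx : φ (star x * x) ≠ 0) (hy : ψ (star y * y) ≠ 0) :
    ∃ ω : A →L[ℂ] ℂ, IsState ω ∧ ω (star x * x) ≠ 0 ∧ ω (star y * y) ≠ 0 := by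
  have hpos : IsPositiveFunctional (φ + ψ) := IsPositiveFunctional.add hφ.1 hψ.1
  have hne : φ + ψ ≠ 0 := by
    rw [← norm_ne_zero_iff, IsPositiveFunctional.norm_add_eq hφ.1 hψ.1, hφ.2, hψ.2]
    norm_num
  have ne_zero (z : A) (hz : φ (star z * z) ≠ 0 ∨ ψ (star z * z) ≠ 0) :
      (‖φ + ψ‖⁻¹ • (φ + ψ)) (star z * z) ≠ 0 := by
    rw [smul_apply]
    refine smul_ne_zero (inv_ne_zero (norm_ne_zero_iff.2 hne)) ?_
    rwa [add_apply, Ne, add_eq_zero_iff_of_nonneg (hφ.1 z) (hψ.1 z), not_and_or]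
  exact ⟨_, hpos.isState_inv_norm_smul hne, ne_zero x (.inl hx), ne_zero y (.inr hy)⟩

namespace IsPureState

variable {φ : A →L[ℂ] ℂ}

theorem eq_norm_smul_of_eq_add (hφ : IsPureState φ) {f g : A →L[ℂ] ℂ}
    (hf : IsPositiveFunctional f) (hg : IsPositiveFunctional g) (h : φ = f + g) :
    f = ‖f‖ • φ := by
  rcases eq_or_ne f 0 with rfl | hf₀
  · simpa only [norm_zero] using (zero_smul ℝ φ).symm
  rcases eq_or_ne g 0 with rfl | hg₀
  · rw [add_zero] at h
    rw [← h, hφ.1.2, one_smul]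
  have hsum : ‖f‖ + ‖g‖ = 1 := by rw [← hf.norm_add_eq hg, ← h, hφ.1.2]
  have hconvex : φ = ‖f‖ • (‖f‖⁻¹ • f) + (1 - ‖f‖) • (‖g‖⁻¹ • g) := by
    rw [← hsum, add_sub_cancel_left, smul_inv_smul₀ (norm_ne_zero_iff.2 hf₀),
      smul_inv_smul₀ (norm_ne_zero_iff.2 hg₀), h]
  have hlt : ‖f‖ < 1 := by linarith [norm_pos_iff.2 hg₀]
  have hfφ := (hφ.2 _ _ _ (hf.isState_inv_norm_smul hf₀) (hg.isState_inv_norm_smul hg₀)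
    (norm_pos_iff.2 hf₀) hlt hconvex).1
  rw [← hfφ, smul_inv_smul₀ (norm_ne_zero_iff.2 hf₀)]

theorem eq_zero_or_eq_zero_of_forall_mul_mul_eq_zero (hφ : IsPureState φ) {p q : A}
    (hpq : ∀ c, p * c * q = 0) : φ (star p * p) = 0 ∨ φ (q * star q) = 0 := by
  obtain ⟨f, g, hf, hg, hfg, hfq, hgp⟩ :=
    IsPositiveFunctional.exists_eq_add_of_forall_mul_mul_eq_zero hφ.1.1 hpq
  rw [hφ.eq_norm_smul_of_eq_add hf hg hfg, smul_apply, smul_eq_zero, norm_eq_zero] at hfq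
  rw [hφ.eq_norm_smul_of_eq_add hg hf (hfg.trans (add_comm f g)), smul_apply, smul_eq_zero,
    norm_eq_zero] at hgp
  refine hgp.symm.imp_right fun hg₀ ↦ hfq.resolve_left fun hf₀ ↦ ?_
  simpa [hfg, hf₀, hg₀] using hφ.1.2

end IsPureState

theorem apply_mul_apply_eq_zero_of_mem_closure_isPureState {p q : A}
    (hpq : ∀ c, p * c * q = 0) {f : A → ℂ}
    (hf : f ∈ closure {f : A → ℂ | ∃ ψ : A →L[ℂ] ℂ, IsPureState ψ ∧ f = ⇑ψ}) :
    f (star p * p) * f (q * star q) = 0 := by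
  have hclosed : IsClosed {f : A → ℂ | f (star p * p) * f (q * star q) = 0} :=
    isClosed_eq (by fun_prop) continuous_const
  refine closure_minimal ?_ hclosed hf
  rintro _ ⟨ψ, hψ, rfl⟩
  exact mul_eq_zero.2 (hψ.eq_zero_or_eq_zero_of_forall_mul_mul_eq_zero hpq)

end PureState

theorem exists_forall_mul_mul_eq_zero_of_not_isPrimeCStar {A : Type*} [CStarAlgebra A]
    (hA : ¬ IsPrimeCStar A) : ∃ a b : A, a ≠ 0 ∧ b ≠ 0 ∧ ∀ c, a * c * b = 0 := by
  have exists_ne_zero {I : TwoSidedIdeal A} (hI : I ≠ ⊥) : ∃ x ∈ I, x ≠ 0 := by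
    by_contra! h
    exact hI (le_bot_iff.1 fun x hx ↦ (TwoSidedIdeal.mem_bot A).2 (h x hx))
  simp only [IsPrimeCStar, not_forall, not_not] at hA
  obtain ⟨I, J, -, -, hI, hJ, hIJ⟩ := hA
  obtain ⟨a, haI, ha⟩ := exists_ne_zero hI
  obtain ⟨b, hbJ, hb⟩ := exists_ne_zero hJ
  refine ⟨a, b, ha, hb, fun c ↦ ?_⟩
  rw [← TwoSidedIdeal.mem_bot A, ← hIJ, TwoSidedIdeal.mem_inf]
  exact ⟨I.mul_mem_right _ _ (I.mul_mem_right _ _ haI), J.mul_mem_left _ _ hbJ⟩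

namespace ShiftTensorModel

variable {A : Type*} [CStarAlgebra A] {T : Type*} [CStarAlgebra T] (M : ShiftTensorModel A T)

/-- The product of the elements `M.e i (a i)` in the order in which the sites `i` occur in `l`. When
`l` has no duplicates this is the elementary tensor with entry `a i` at each site of `l` and `1`
elsewhere. -/
def elementaryTensor (l : List ℤ) (a : ℤ → A) : T :=
  (l.map fun i ↦ M.e i (a i)).prod

@[simp]
theorem elementaryTensor_nil (a : ℤ → A) : M.elementaryTensor [] a = 1 := rfl

@[simp]
theorem elementaryTensor_cons (i : ℤ) (l : List ℤ) (a : ℤ → A) :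
    M.elementaryTensor (i :: l) a = M.e i (a i) * M.elementaryTensor l a := by
  simp [elementaryTensor]

theorem elementaryTensor_update_of_notMem {j : ℤ} {l : List ℤ} (hj : j ∉ l) (a : ℤ → A) (x : A) :
    M.elementaryTensor l (Function.update a j x) = M.elementaryTensor l a := by
  unfold elementaryTensor
  congr 1
  refine List.map_congr_left fun i hi ↦ ?_
  rw [Function.update_of_ne (ne_of_mem_of_not_mem hi hj)]

theorem elementaryTensor_perm {l l' : List ℤ} (h : l.Perm l') (hl : l.Nodup) (a : ℤ → A) :
    M.elementaryTensor l a = M.elementaryTensor l' a :=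
  (h.map _).prod_eq' <| List.pairwise_map.2 <| hl.imp fun hij ↦ M.commutes _ _ hij _ _

theorem exists_e_mul_elementaryTensor_eq {l : List ℤ} (hl : l.Nodup) (j : ℤ) (x : A)
    (a : ℤ → A) :
    ∃ (l' : List ℤ) (a' : ℤ → A), l'.Nodup ∧
      M.e j x * M.elementaryTensor l a = M.elementaryTensor l' a' := by
  have e_mul (l : List ℤ) (hj : j ∉ l) (y : A) :
      M.e j y * M.elementaryTensor l a =
        M.elementaryTensor (j :: l) (Function.update a j y) := by
    rw [elementaryTensor_cons, Function.update_self, M.elementaryTensor_update_of_notMem hj]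
  by_cases hj : j ∈ l
  · refine ⟨j :: l.erase j, Function.update a j (x * a j),
      (List.perm_cons_erase hj).nodup_iff.1 hl, ?_⟩
    rw [M.elementaryTensor_perm (List.perm_cons_erase hj) hl, elementaryTensor_cons, ← mul_assoc,
      ← map_mul, e_mul _ hl.not_mem_erase]
  · exact ⟨j :: l, Function.update a j x, List.nodup_cons.2 ⟨hj, hl⟩, e_mul l hj x⟩

theorem exists_eq_elementaryTensor {t : T}
    (ht : t ∈ Submonoid.closure (⋃ n, Set.range (M.e n))) :
    ∃ (l : List ℤ) (a : ℤ → A), l.Nodup ∧ t = M.elementaryTensor l a := by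
  induction ht using Submonoid.closure_induction_left with
  | one => exact ⟨[], 0, List.nodup_nil, rfl⟩
  | mul_left s hs t _ ih =>
    obtain ⟨l, a, hl, rfl⟩ := ih
    obtain ⟨j, x, rfl⟩ := by simpa using hs
    exact M.exists_e_mul_elementaryTensor_eq hl j x a

theorem star_iUnion_range_e : star (⋃ n, Set.range (M.e n)) = ⋃ n, Set.range (M.e n) := by
  rw [Set.iUnion_star]
  exact Set.iUnion_congr fun n ↦ StarMemClass.star_coe_eq (M.e n).range

theorem dense_span_elementaryTensor :
    Dense (Submodule.span ℂ {t | ∃ l a, l.Nodup ∧ t = M.elementaryTensor l a} : Set T) := by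
  have hdense : Dense (StarAlgebra.adjoin ℂ (⋃ n, Set.range (M.e n)) : Set T) := by
    rw [dense_iff_closure_eq, ← StarSubalgebra.topologicalClosure_coe, M.generating]
    rfl
  refine hdense.mono fun t ht ↦ Submodule.span_mono (fun t ↦ M.exists_eq_elementaryTensor) ?_
  have hspan := StarAlgebra.adjoin_eq_span (R := ℂ) (⋃ n, Set.range (M.e n))
  rw [M.star_iUnion_range_e, Set.union_self] at hspan
  exact hspan ▸ ht

theorem continuousLinearMap_ext {E : Type*} [AddCommMonoid E] [Module ℂ E] [TopologicalSpace E]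
    [T2Space E] {F G : T →L[ℂ] E}
    (h : ∀ l a, l.Nodup → F (M.elementaryTensor l a) = G (M.elementaryTensor l a)) : F = G := by
  refine ContinuousLinearMap.ext_on M.dense_span_elementaryTensor ?_
  rintro _ ⟨l, a, hl, rfl⟩
  exact h l a hl

theorem shift_elementaryTensor (l : List ℤ) (a : ℤ → A) :
    M.shift (M.elementaryTensor l a) =
      M.elementaryTensor (l.map (· + 1)) fun i ↦ a (i - 1) := by
  simp [elementaryTensor, map_list_prod, Function.comp_def, M.shift_apply]

theorem exists_shift_invariant_isState_extension {φ : A →L[ℂ] ℂ} (hφ : IsState φ) :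
    ∃ Φ : T →L[ℂ] ℂ, IsState Φ ∧ (∀ t, Φ (M.shift t) = Φ t) ∧ ∀ n x, Φ (M.e n x) = φ x := by
  obtain ⟨Φ, hΦ, hprod⟩ := M.prodState (fun _ ↦ φ) fun _ ↦ hφ
  have hprod' (l : List ℤ) (hl : l.Nodup) (a : ℤ → A) :
      Φ (M.elementaryTensor l a) = (l.map fun i ↦ φ (a i)).prod := hprod l hl a
  have hshift :
      Φ ∘L { toLinearMap := (M.shift : T →ₗ[ℂ] T), cont := map_continuous M.shift } = Φ := by
    refine M.continuousLinearMap_ext fun l a hl ↦ ?_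
    change Φ (M.shift _) = _
    rw [shift_elementaryTensor, hprod' _ (hl.map (add_left_injective 1)), hprod' l hl]
    simp [Function.comp_def]
  exact ⟨Φ, hΦ, DFunLike.congr_fun hshift,
    fun n x ↦ by simpa using hprod [n] (List.nodup_singleton n) fun _ ↦ x⟩

theorem e_mul_elementaryTensor_mul_e_eq_zero {a b : A} (hab : ∀ c, a * c * b = 0) (n : ℤ)
    (l : List ℤ) (c : ℤ → A) : M.e n a * M.elementaryTensor l c * M.e n b = 0 := by
  induction l generalizing a with
  | nil => simpa [← map_mul] using congrArg (M.e n) (hab 1)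
  | cons i l ih =>
    rw [elementaryTensor_cons, ← mul_assoc]
    rcases eq_or_ne i n with rfl | hi
    · rw [← map_mul]
      exact ih fun d ↦ by simpa [mul_assoc] using hab (c i * d)
    · rw [M.commutes n i hi.symm, mul_assoc (M.e i _), mul_assoc (M.e i _), ih hab, mul_zero]

theorem e_mul_mul_e_eq_zero {a b : A} (hab : ∀ c, a * c * b = 0) (n : ℤ) (t : T) :
    M.e n a * t * M.e n b = 0 := by
  have h : ContinuousLinearMap.mulLeftRight ℂ T (M.e n a) (M.e n b) = 0 :=
    M.continuousLinearMap_ext fun l c _ ↦ M.e_mul_elementaryTensor_mul_e_eq_zero hab n l c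
  exact DFunLike.congr_fun h t

theorem exists_isState_apply_star_mul_self_ne_zero (M : ShiftTensorModel A T) {x : A}
    (hx : x ≠ 0) : ∃ φ : A →L[ℂ] ℂ, IsState φ ∧ φ (star x * x) ≠ 0 := by
  have hne : M.e 0 (star x * x) ≠ 0 := by
    rwa [Ne, map_eq_zero_iff _ (M.inj 0), CStarRing.star_mul_self_eq_zero_iff]
  obtain ⟨φ, Φ, hφ, -, hΦ, hprod⟩ := M.minimality _ ⟨M.e 0 x, by rw [map_mul, map_star]⟩ hne
  refine ⟨φ 0, hφ 0, ?_⟩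
  rwa [← show Φ (M.e 0 (star x * x)) = φ 0 (star x * x) by
    simpa using hprod [0] (List.nodup_singleton 0) fun _ ↦ star x * x]

end ShiftTensorModel

/-- **Remark 4.3**: if `A` is a unital C*-algebra which is not prime, then for the shift on
the two-sided infinite (minimal) tensor product `⊗_{n=-∞}^∞ A` there is a shift-invariant
state which cannot be weak*-approximated by pure states at all; in particular the invariant
pure states are not weak*-dense in the invariant states. -/
theorem shift_invariant_state_not_approximable_of_not_prime
    {A : Type*} [CStarAlgebra A] (hnotprime : ¬ IsPrimeCStar A)
    {T : Type*} [CStarAlgebra T] (M : ShiftTensorModel A T) :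
    (∃ φ : T →L[ℂ] ℂ, IsState φ ∧ (∀ x, φ (M.shift x) = φ x) ∧
      ⇑φ ∉ closure {f : T → ℂ | ∃ ψ : T →L[ℂ] ℂ, IsPureState ψ ∧ f = ⇑ψ}) ∧
    ¬ ({f : T → ℂ | ∃ φ : T →L[ℂ] ℂ, IsState φ ∧ (∀ x, φ (M.shift x) = φ x) ∧ f = ⇑φ} ⊆
      closure {f : T → ℂ | ∃ φ : T →L[ℂ] ℂ, IsPureState φ ∧ (∀ x, φ (M.shift x) = φ x) ∧
        f = ⇑φ}) := by
  obtain ⟨a, b, ha, hb, hab⟩ := exists_forall_mul_mul_eq_zero_of_not_isPrimeCStar hnotprime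
  obtain ⟨φ₁, hφ₁, hφ₁a⟩ := M.exists_isState_apply_star_mul_self_ne_zero ha
  obtain ⟨φ₂, hφ₂, hφ₂b⟩ := M.exists_isState_apply_star_mul_self_ne_zero (star_ne_zero.2 hb)
  obtain ⟨φ, hφ, hφa, hφb⟩ := hφ₁.exists_apply_star_mul_self_ne_zero hφ₂ hφ₁a hφ₂b
  obtain ⟨Φ, hΦ, hinv, hΦe⟩ := M.exists_shift_invariant_isState_extension hφ
  have hnot : ⇑Φ ∉ closure {f : T → ℂ | ∃ ψ : T →L[ℂ] ℂ, IsPureState ψ ∧ f = ⇑ψ} := fun hmem ↦ by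
    have hzero :=
      apply_mul_apply_eq_zero_of_mem_closure_isPureState (M.e_mul_mul_e_eq_zero hab 0) hmem
    simp only [← map_star (M.e 0), ← map_mul (M.e 0), hΦe] at hzero
    exact mul_ne_zero hφa (by rwa [star_star] at hφb) hzero
  refine ⟨⟨Φ, hΦ, hinv, hnot⟩, fun hsub ↦ hnot (closure_mono ?_ (hsub ⟨Φ, hΦ, hinv, rfl⟩))⟩
  rintro _ ⟨ψ, hψ, -, rfl⟩
  exact ⟨ψ, hψ, rfl⟩
end
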